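/- In the critical regime p = 3/4, for every n ≥ 1 the second moment of the position is 𝔼[S_n²] = n·H_n, where H_n = Σ_{k=1}^n 1/k is the n-th harmonic number. -/

import Mathlib

open MeasureTheory ProbabilityTheory Filter Finset
open scoped BoundedContinuousFunction ENNReal NNReal Topology

noncomputable section

variable {Ω : Type*}

/-- Position of the elephant random walk: `S n = X 1 + ⋯ + X n`. -/
def erwS (X : ℕ → Ω → ℝ) (n : ℕ) (ω : Ω) : ℝ :=
  ∑ k ∈ Finset.Icc 1 n, X k ω

/-- `V n = 4 ∑_{k=1}^{n-1} (S k / k)²`, the approximate conditional Fisher information. -/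
def erwV (X : ℕ → Ω → ℝ) (n : ℕ) (ω : Ω) : ℝ :=
  4 * ∑ k ∈ Finset.Icc 1 (n - 1), (erwS X k ω / k) ^ 2

/-- The quasi-maximum likelihood estimator `p̂ n` of the memory parameter. -/
def erwPhat (X : ℕ → Ω → ℝ) (n : ℕ) (ω : Ω) : ℝ :=
  (∑ k ∈ Finset.Icc 1 (n - 1), (erwS X k ω / k) * (X (k + 1) ω + erwS X k ω / k)) /
    (2 * ∑ k ∈ Finset.Icc 1 (n - 1), (erwS X k ω / k) ^ 2)

/-- The elephant random walk hypotheses with memory parameter `p ∈ [0,1]`: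
the steps take values in `{-1, 1}`, are adapted to the filtration `ℱ`
(which plays the role of `σ(X_1, …, X_n)`), and
`E[X_{n+1} | ℱ_n] = (2p - 1) · S_n / n` almost surely. -/
def IsERW {m0 : MeasurableSpace Ω} (μ : Measure Ω) (ℱ : Filtration ℕ m0)
    (X : ℕ → Ω → ℝ) (p : ℝ) : Prop :=
  0 ≤ p ∧ p ≤ 1 ∧
  (∀ n, 1 ≤ n → ∀ ω, X n ω = 1 ∨ X n ω = -1) ∧
  (∀ n, 1 ≤ n → Measurable[ℱ n] (X n)) ∧
  (∀ n, 1 ≤ n → μ[X (n + 1) | ℱ n] =ᵐ[μ] fun ω => (2 * p - 1) * (erwS X n ω / n))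

/-!
Writing `S_{n+1} = S_n + X_{n+1}` and conditioning the cross term on `ℱ_n` gives
`E[S_{n+1}²] = (1 + 2a/n) E[S_n²] + E[X_{n+1}²]` with `a = 2p - 1`. In the critical case `a = 1/2`
the factor is `(n + 1)/n`, so `E[S_n²]/n` telescopes with increments `E[X_{n+1}²]/(n + 1)`.
-/

section PullOut

variable {m m0 : MeasurableSpace Ω} {μ : Measure Ω} {f g : Ω → ℝ}

theorem integral_mul_condExp_of_aestronglyMeasurable (hm : m ≤ m0) [SigmaFinite (μ.trim hm)]
    (hf : AEStronglyMeasurable[m] f μ) (hfg : Integrable (f * g) μ) (hg : Integrable g μ) :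
    ∫ ω, f ω * (μ[g | m]) ω ∂μ = ∫ ω, f ω * g ω ∂μ :=
  calc ∫ ω, f ω * (μ[g | m]) ω ∂μ
    _ = ∫ ω, (μ[f * g | m]) ω ∂μ :=
      integral_congr_ae (condExp_mul_of_aestronglyMeasurable_left hf hfg hg).symm
    _ = ∫ ω, f ω * g ω ∂μ := integral_condExp hm

theorem integral_add_sq_of_condExp_eq_const_mul [IsFiniteMeasure μ] {c : ℝ} (hm : m ≤ m0)
    (hf_meas : AEStronglyMeasurable[m] f μ) (hf : MemLp f 2 μ) (hg : MemLp g 2 μ)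
    (hfg : μ[g | m] =ᵐ[μ] fun ω => c * f ω) :
    ∫ ω, (f ω + g ω) ^ 2 ∂μ = (1 + 2 * c) * ∫ ω, f ω ^ 2 ∂μ + ∫ ω, g ω ^ 2 ∂μ := by
  have h_int : Integrable (f * g) μ := hf.integrable_mul hg
  have h_cross : ∫ ω, f ω * g ω ∂μ = c * ∫ ω, f ω ^ 2 ∂μ := by
    rw [← integral_mul_condExp_of_aestronglyMeasurable hm hf_meas h_int (hg.integrable one_le_two),
      ← integral_const_mul]
    refine integral_congr_ae (hfg.mono fun ω hω => ?_)
    simp only [hω]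
    ring
  have h_int_two : Integrable (fun ω => 2 * (f ω * g ω)) μ := h_int.const_mul 2
  have h_int_add : Integrable (fun ω => f ω ^ 2 + 2 * (f ω * g ω)) μ :=
    hf.integrable_sq.add h_int_two
  calc ∫ ω, (f ω + g ω) ^ 2 ∂μ
    _ = ∫ ω, (f ω ^ 2 + 2 * (f ω * g ω) + g ω ^ 2) ∂μ := by
      simp only [add_sq, mul_assoc]
    _ = ∫ ω, f ω ^ 2 ∂μ + 2 * ∫ ω, f ω * g ω ∂μ + ∫ ω, g ω ^ 2 ∂μ := by
      rw [integral_add h_int_add hg.integrable_sq,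
        integral_add hf.integrable_sq h_int_two, integral_const_mul]
    _ = (1 + 2 * c) * ∫ ω, f ω ^ 2 ∂μ + ∫ ω, g ω ^ 2 ∂μ := by
      rw [h_cross]
      ring

end PullOut

section Walk

variable {m0 : MeasurableSpace Ω} {μ : Measure Ω} {ℱ : Filtration ℕ m0} {X : ℕ → Ω → ℝ}

theorem erwS_one (X : ℕ → Ω → ℝ) (ω : Ω) : erwS X 1 ω = X 1 ω := by
  simp [erwS]

theorem erwS_succ (X : ℕ → Ω → ℝ) (n : ℕ) (ω : Ω) :
    erwS X (n + 1) ω = erwS X n ω + X (n + 1) ω :=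
  sum_Icc_succ_top (Nat.le_add_left 1 n) _

theorem measurable_erwS (hX : ∀ k, 1 ≤ k → Measurable[ℱ k] (X k)) (n : ℕ) :
    Measurable[ℱ n] (erwS X n) :=
  measurable_fun_sum _ fun k hk =>
    (hX k (mem_Icc.1 hk).1).mono (ℱ.mono (mem_Icc.1 hk).2) le_rfl

theorem memLp_erwS {q : ℝ≥0∞} (hX : ∀ k, 1 ≤ k → MemLp (X k) q μ) (n : ℕ) :
    MemLp (erwS X n) q μ :=
  memLp_finsetSum _ fun k hk => hX k (mem_Icc.1 hk).1

theorem integral_erwS_succ_sq [IsFiniteMeasure μ] {a : ℝ} {n : ℕ}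
    (hX_meas : ∀ k, 1 ≤ k → Measurable[ℱ k] (X k)) (hX : ∀ k, 1 ≤ k → MemLp (X k) 2 μ)
    (h_cond : μ[X (n + 1) | ℱ n] =ᵐ[μ] fun ω => a * (erwS X n ω / n)) :
    ∫ ω, erwS X (n + 1) ω ^ 2 ∂μ =
      (1 + 2 * a / n) * ∫ ω, erwS X n ω ^ 2 ∂μ + ∫ ω, X (n + 1) ω ^ 2 ∂μ := by
  have h_cond' : μ[X (n + 1) | ℱ n] =ᵐ[μ] fun ω => a / n * erwS X n ω := by
    filter_upwards [h_cond] with ω hω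
    rw [hω, mul_div_left_comm, mul_comm]
  simp only [erwS_succ, mul_div_assoc]
  exact integral_add_sq_of_condExp_eq_const_mul (ℱ.le n)
    (measurable_erwS hX_meas n).aestronglyMeasurable (memLp_erwS hX n)
    (hX (n + 1) (Nat.le_add_left 1 n)) h_cond'

theorem erw_second_moment_critical_general [IsFiniteMeasure μ]
    (hX_meas : ∀ k, 1 ≤ k → Measurable[ℱ k] (X k)) (hX : ∀ k, 1 ≤ k → MemLp (X k) 2 μ)
    (h_cond : ∀ k, 1 ≤ k → μ[X (k + 1) | ℱ k] =ᵐ[μ] fun ω => 1 / 2 * (erwS X k ω / k)) :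
    ∀ n, 1 ≤ n →
      ∫ ω, erwS X n ω ^ 2 ∂μ = n * ∑ k ∈ Icc 1 n, (∫ ω, X k ω ^ 2 ∂μ) / k := by
  intro n hn
  induction n, hn using Nat.le_induction with
  | base => simp [erwS_one]
  | succ n hn ih =>
    have hn0 : (n : ℝ) ≠ 0 := by positivity
    rw [integral_erwS_succ_sq hX_meas hX (h_cond n hn), ih,
      sum_Icc_succ_top (Nat.le_add_left 1 n)]
    push_cast
    field_simp

end Walk

namespace IsERW

variable {m0 : MeasurableSpace Ω} {μ : Measure Ω} {ℱ : Filtration ℕ m0} {X : ℕ → Ω → ℝ} {p : ℝ}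

theorem measurable (h : IsERW μ ℱ X p) (n : ℕ) (hn : 1 ≤ n) : Measurable[ℱ n] (X n) :=
  h.2.2.2.1 n hn

theorem sq_eq_one (h : IsERW μ ℱ X p) {n : ℕ} (hn : 1 ≤ n) (ω : Ω) : X n ω ^ 2 = 1 :=
  sq_eq_one_iff.2 (h.2.2.1 n hn ω)

theorem condExp_eq (h : IsERW μ ℱ X p) (n : ℕ) (hn : 1 ≤ n) :
    μ[X (n + 1) | ℱ n] =ᵐ[μ] fun ω => (2 * p - 1) * (erwS X n ω / n) :=
  h.2.2.2.2 n hn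

theorem memLp [IsFiniteMeasure μ] {q : ℝ≥0∞} (h : IsERW μ ℱ X p) (n : ℕ) (hn : 1 ≤ n) :
    MemLp (X n) q μ :=
  .of_bound ((h.measurable n hn).mono (ℱ.le n) le_rfl).aestronglyMeasurable 1
    (ae_of_all _ fun ω => (sq_le_one_iff_abs_le_one _).1 (h.sq_eq_one hn ω).le)

end IsERW

/-- In the critical regime `p = 3/4`, `E[S_n²] = n H_n` where `H_n` is the `n`-th
harmonic number. -/
theorem erw_second_moment_critical
    {m0 : MeasurableSpace Ω} (μ : Measure Ω) [IsProbabilityMeasure μ]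
    (ℱ : Filtration ℕ m0) (X : ℕ → Ω → ℝ)
    (hERW : IsERW μ ℱ X (3 / 4)) :
    ∀ n, 1 ≤ n → ∫ ω, (erwS X n ω) ^ 2 ∂μ = n * ∑ k ∈ Finset.Icc 1 n, (1 : ℝ) / k := by
  intro n hn
  rw [erw_second_moment_critical_general hERW.measurable hERW.memLp
    (fun k hk => by convert hERW.condExp_eq k hk using 3; norm_num) n hn]
  refine congrArg _ (sum_congr rfl fun k hk => ?_)
  simp [hERW.sq_eq_one (mem_Icc.1 hk).1]
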